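/- Let G~ be a mixed graph with a pendant vertex u whose unique neighbor in G is v. If r(G~) = 2m(G) − 2κ(G) + s for some s ∈ {0,1}, then v lies on no even cycle of G. -/

import Mathlib

open scoped Classical

namespace MixedPaper

universe u

/-- A mixed graph: a finite simple graph together with an orientation of a subset
of its edges.  `arc u v = true` means there is an arc from `u` to `v`. -/
structure MixedGraph (V : Type u) where
  graph : SimpleGraph V
  arc : V → V → Bool
  arc_adj : ∀ u v, arc u v → graph.Adj u v
  arc_antisymm : ∀ u v, arc u v → ¬ arc v u

variable {V : Type u}

/-- The Hermitian adjacency matrix of a mixed graph. -/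
noncomputable def MixedGraph.hMatrix [Fintype V] [DecidableEq V] (M : MixedGraph V) :
    Matrix V V ℂ := fun u v =>
  if M.arc u v then Complex.I
  else if M.arc v u then -Complex.I
  else if M.graph.Adj u v then 1 else 0

/-- The H-rank of a mixed graph: the rank of its Hermitian adjacency matrix. -/
noncomputable def MixedGraph.hRank [Fintype V] [DecidableEq V] (M : MixedGraph V) : ℕ :=
  M.hMatrix.rank

/-- The matching number of a simple graph. -/
noncomputable def matchingNumber (G : SimpleGraph V) : ℕ :=
  sSup {k | ∃ N : G.Subgraph, N.IsMatching ∧ N.edgeSet.ncard = k}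

/-- A subgraph is a cycle subgraph if it is connected and every one of its vertices
has exactly two neighbours in it. -/
def IsCycleSubgraph {G : SimpleGraph V} (C : G.Subgraph) : Prop :=
  C.Connected ∧ ∀ v ∈ C.verts, {w | C.Adj v w}.ncard = 2

/-- κ(G) : the number of even cycles of G. -/
noncomputable def evenCycleCount (G : SimpleGraph V) : ℕ :=
  {C : G.Subgraph | IsCycleSubgraph C ∧ Even C.verts.ncard}.ncard

/-- c(G) = |E(G)| - |V(G)| + ω(G), the cyclomatic number. -/
noncomputable def cyclomatic [Fintype V] (G : SimpleGraph V) : ℤ :=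
  (G.edgeSet.ncard : ℤ) - (Fintype.card V : ℤ) + (Nat.card G.ConnectedComponent : ℤ)

/-- The induced mixed subgraph on a set of vertices. -/
def MixedGraph.induce (M : MixedGraph V) (S : Set V) : MixedGraph S where
  graph := M.graph.induce S
  arc := fun a b => M.arc a.1 b.1
  arc_adj := fun a b h => M.arc_adj a.1 b.1 h
  arc_antisymm := fun a b h => M.arc_antisymm a.1 b.1 h

/-- The mixed subgraph induced by a connected component of the underlying graph. -/
def MixedGraph.comp (M : MixedGraph V) (c : M.graph.ConnectedComponent) :
    MixedGraph c.supp := M.induce c.supp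

/-- The signature |f - b| of a closed walk in a mixed graph: the absolute difference
between the numbers of forward and backward arcs along the walk. -/
def walkSignature (M : MixedGraph V) {u : V} (w : M.graph.Walk u u) : ℕ :=
  ((w.darts.countP fun d => M.arc d.toProd.1 d.toProd.2 : ℤ) -
    (w.darts.countP fun d => M.arc d.toProd.2 d.toProd.1 : ℤ)).natAbs

/-- The signature of the cycle subgraph `C` of the mixed graph `M` satisfies the
predicate `P` (expressed via a closed walk traversing `C`; the signature does not
depend on the choice of traversal). -/
def CycleSig (M : MixedGraph V) (C : M.graph.Subgraph) (P : ℕ → Prop) : Prop :=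
  ∃ (u : V) (w : M.graph.Walk u u), w.IsCycle ∧
    {v | v ∈ w.support} = C.verts ∧ {e | e ∈ w.edges} = C.edgeSet ∧
    P (walkSignature M w)

/-- `C` is a pendant cycle with unique vertex `x` of degree 3. -/
def IsPendantCycle (G : SimpleGraph V) (C : G.Subgraph) (x : V) : Prop :=
  IsCycleSubgraph C ∧ x ∈ C.verts ∧ {w | G.Adj x w}.ncard = 3 ∧
    ∀ v ∈ C.verts, v ≠ x → {w | G.Adj v w}.ncard = 2

/-- G has no pendant vertices (vertices of degree 1). -/
def NoPendantVerts (G : SimpleGraph V) : Prop := ∀ u : V, {w | G.Adj u w}.ncard ≠ 1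

/-- The (distinct) cycles of G are pairwise vertex-disjoint. -/
def CyclesVertexDisjoint (G : SimpleGraph V) : Prop :=
  ∀ C₁ C₂ : G.Subgraph, IsCycleSubgraph C₁ → IsCycleSubgraph C₂ → C₁ ≠ C₂ →
    Disjoint C₁.verts C₂.verts

/-- The (distinct) even cycles of G are pairwise vertex-disjoint. -/
def EvenCyclesVertexDisjoint (G : SimpleGraph V) : Prop :=
  ∀ C₁ C₂ : G.Subgraph, IsCycleSubgraph C₁ → IsCycleSubgraph C₂ →
    Even C₁.verts.ncard → Even C₂.verts.ncard → C₁ ≠ C₂ →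
    Disjoint C₁.verts C₂.verts

/-- One pendant `K₂` deletion step, recorded on the surviving vertex sets:
`u` is pendant in the graph induced on `S` with unique neighbour `v` there,
and both are deleted. -/
def PendantStep (G : SimpleGraph V) (S T : Set V) : Prop :=
  ∃ u v, u ∈ S ∧ v ∈ S ∧ {w | w ∈ S ∧ G.Adj u w} = {v} ∧ T = S \ {u, v}

/-- `S` is reachable from the full vertex set by a sequence of pendant K₂ deletions. -/
def PendantReaches (G : SimpleGraph V) (S : Set V) : Prop :=
  Relation.ReflTransGen (PendantStep G) Set.univ S

/-- The graph induced on `S` has no pendant vertices. -/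
def NoPendantIn (G : SimpleGraph V) (S : Set V) : Prop :=
  ∀ u ∈ S, {w | w ∈ S ∧ G.Adj u w}.ncard ≠ 1

/-- `u` lies on some even cycle of `G`. -/
def OnEvenCycle (G : SimpleGraph V) (u : V) : Prop :=
  ∃ C : G.Subgraph, IsCycleSubgraph C ∧ Even C.verts.ncard ∧ u ∈ C.verts

/-- G is the graph ∞(p,1,q): two cycles of lengths p and q sharing exactly one vertex. -/
def IsInfinityGraph (G : SimpleGraph V) (p q : ℕ) : Prop :=
  ∃ C₁ C₂ : G.Subgraph, IsCycleSubgraph C₁ ∧ IsCycleSubgraph C₂ ∧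
    C₁.verts.ncard = p ∧ C₂.verts.ncard = q ∧
    (C₁.verts ∩ C₂.verts).ncard = 1 ∧ C₁ ⊔ C₂ = ⊤

/-- G is the theta graph θ(p,l,q): three internally disjoint paths with p, l, q
vertices respectively, joining two common endvertices. -/
def IsThetaGraph (G : SimpleGraph V) (p l q : ℕ) : Prop :=
  2 ≤ p ∧ 2 ≤ l ∧ 2 ≤ q ∧ ¬(p = 2 ∧ l = 2) ∧ ¬(p = 2 ∧ q = 2) ∧ ¬(l = 2 ∧ q = 2) ∧
  ∃ (a b : V) (W₁ W₂ W₃ : G.Walk a b), W₁.IsPath ∧ W₂.IsPath ∧ W₃.IsPath ∧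
    W₁.length = p - 1 ∧ W₂.length = l - 1 ∧ W₃.length = q - 1 ∧
    (∀ v : V, v ∈ W₁.support ∨ v ∈ W₂.support ∨ v ∈ W₃.support) ∧
    (∀ e ∈ G.edgeSet, e ∈ W₁.edges ∨ e ∈ W₂.edges ∨ e ∈ W₃.edges) ∧
    {v | v ∈ W₁.support ∧ v ∈ W₂.support} = {a, b} ∧
    {v | v ∈ W₁.support ∧ v ∈ W₃.support} = {a, b} ∧
    {v | v ∈ W₂.support ∧ v ∈ W₃.support} = {a, b}

/-- Every odd cycle of `M` has signature satisfying `P`. -/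
def OddCyclesSig (M : MixedGraph V) (P : ℕ → Prop) : Prop :=
  ∀ C : M.graph.Subgraph, IsCycleSubgraph C → Odd C.verts.ncard → CycleSig M C P

/-- Every even cycle of `M`, of length `n`, has signature `s` satisfying `P n s`. -/
def EvenCyclesSig (M : MixedGraph V) (P : ℕ → ℕ → Prop) : Prop :=
  ∀ C : M.graph.Subgraph, IsCycleSubgraph C → Even C.verts.ncard →
    CycleSig M C (P C.verts.ncard)

/-- The whole mixed graph is a single cycle. -/
def IsCycleMG (M : MixedGraph V) : Prop := IsCycleSubgraph (⊤ : M.graph.Subgraph)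

/-- The family 𝔊₀. -/
def MemG0 [Fintype V] [DecidableEq V] (M : MixedGraph V) : Prop :=
  M.graph.Connected ∧ 1 ≤ cyclomatic M.graph ∧ CyclesVertexDisjoint M.graph ∧
  NoPendantVerts M.graph ∧
  ∃ (C : M.graph.Subgraph) (x : V), IsPendantCycle M.graph C x ∧ Odd C.verts.ncard ∧
    CycleSig M C Odd ∧
    ((M.induce (C.vertsᶜ ∪ {x})).hRank : ℤ) =
      2 * (matchingNumber (M.induce (C.vertsᶜ ∪ {x})).graph : ℤ) -
        2 * cyclomatic (M.induce (C.vertsᶜ ∪ {x})).graph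

/-- The family 𝔛₁ : mixed ∞(p,1,q)-graphs, p even, q odd, whose odd cycle has odd
signature and whose even cycle C̃_p satisfies σ ≡ p (mod 4). -/
def MemX1 (M : MixedGraph V) : Prop :=
  ∃ p q : ℕ, Even p ∧ Odd q ∧ IsInfinityGraph M.graph p q ∧
    OddCyclesSig M Odd ∧ EvenCyclesSig M (fun n s => s % 4 = n % 4)

/-- The family 𝔛₂ : mixed θ(p,l,q)-graphs, p even, l q odd, whose two odd cycles have odd
signatures and whose even cycle C̃_{q+l-2} satisfies q + l + σ ≡ 2 (mod 4). -/
def MemX2 (M : MixedGraph V) : Prop :=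
  ∃ p l q : ℕ, Even p ∧ Odd l ∧ Odd q ∧ IsThetaGraph M.graph p l q ∧
    OddCyclesSig M Odd ∧ EvenCyclesSig M (fun _ s => (q + l + s) % 4 = 2)

/-- The family 𝔊₂ = 𝔊₀ ∪ 𝔛₁ ∪ 𝔛₂ together with the mixed odd cycles of odd signature. -/
def MemG2 [Fintype V] [DecidableEq V] (M : MixedGraph V) : Prop :=
  MemG0 M ∨ MemX1 M ∨ MemX2 M ∨
    (IsCycleMG M ∧ Odd (Nat.card V) ∧ CycleSig M ⊤ Odd)

/-- The family 𝔜₁. -/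
def MemY1 (M : MixedGraph V) : Prop :=
  ∃ p q : ℕ, Even p ∧ Odd q ∧ IsInfinityGraph M.graph p q ∧
    OddCyclesSig M Even ∧ EvenCyclesSig M (fun n s => s % 4 = n % 4)

/-- The family 𝔜₂. -/
def MemY2 (M : MixedGraph V) : Prop :=
  ∃ p l q : ℕ, Even p ∧ Odd l ∧ Odd q ∧ IsThetaGraph M.graph p l q ∧
    OddCyclesSig M Even ∧ EvenCyclesSig M (fun _ s => (q + l + s) % 4 = 2)

/-- `M` is a disjoint union of `k` even cycles and one odd cycle with even signature. -/
def IsDisjointUnionEvenCyclesOddCycleEvenSig (M : MixedGraph V) (k : ℤ) : Prop :=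
  (∀ c : M.graph.ConnectedComponent, IsCycleMG (M.comp c)) ∧
  (({c : M.graph.ConnectedComponent | Even (Nat.card c.supp)}.ncard : ℤ) = k) ∧
  (∃! c : M.graph.ConnectedComponent, Odd (Nat.card c.supp)) ∧
  (∀ c : M.graph.ConnectedComponent, Odd (Nat.card c.supp) →
    CycleSig (M.comp c) ⊤ Even)

/-- The family 𝔉₀. -/
def MemF0 [Fintype V] [DecidableEq V] (M : MixedGraph V) : Prop :=
  M.graph.Connected ∧ 2 ≤ cyclomatic M.graph ∧ CyclesVertexDisjoint M.graph ∧
  NoPendantVerts M.graph ∧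
  (∃ (C₀ : M.graph.Subgraph) (x₀ : V), IsPendantCycle M.graph C₀ x₀ ∧ Odd C₀.verts.ncard ∧
    CycleSig M C₀ Even ∧
    ∀ C : M.graph.Subgraph, IsCycleSubgraph C → C ≠ C₀ →
      Even C.verts.ncard ∧ CycleSig M C (fun s => s % 4 = C.verts.ncard % 4)) ∧
  (∃ (Cq : M.graph.Subgraph) (x : V), IsPendantCycle M.graph Cq x ∧ Even Cq.verts.ncard ∧
    ∃ S : Set ↥(Cq.vertsᶜ ∪ {x}),
      PendantReaches (M.induce (Cq.vertsᶜ ∪ {x})).graph S ∧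
      NoPendantIn (M.induce (Cq.vertsᶜ ∪ {x})).graph S ∧
      IsDisjointUnionEvenCyclesOddCycleEvenSig
        ((M.induce (Cq.vertsᶜ ∪ {x})).induce S)
        (cyclomatic (M.induce (Cq.vertsᶜ ∪ {x})).graph))

/-- The family 𝔉₂ = 𝔉₀ ∪ 𝔜₁ ∪ 𝔜₂ together with the mixed odd cycles of even signature. -/
def MemF2 [Fintype V] [DecidableEq V] (M : MixedGraph V) : Prop :=
  MemF0 M ∨ MemY1 M ∨ MemY2 M ∨
    (IsCycleMG M ∧ Odd (Nat.card V) ∧ CycleSig M ⊤ Even)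

/-- A connected component that is either an even cycle C̃_q with σ ≡ q (mod 4),
or an isolated vertex. -/
def GoodOtherComp (M : MixedGraph V) : Prop :=
  (IsCycleMG M ∧ Even (Nat.card V) ∧
    CycleSig M ⊤ (fun s => s % 4 = (Nat.card V) % 4)) ∨
  Nat.card V = 1

/-- A fractional matching of `G`, given as a weight function on `Sym2 V` vanishing
outside the edge set. -/
def IsFracMatching [Fintype V] [DecidableEq V] (G : SimpleGraph V) (f : Sym2 V → ℝ) : Prop :=
  (∀ e ∈ G.edgeSet, 0 ≤ f e ∧ f e ≤ 1) ∧ (∀ e, e ∉ G.edgeSet → f e = 0) ∧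
    ∀ v : V, ∑ e ∈ Finset.univ.filter (fun e : Sym2 V => v ∈ e), f e ≤ 1

/-- The fractional matching number m*(G). -/
noncomputable def fracMatchingNumber [Fintype V] [DecidableEq V] (G : SimpleGraph V) : ℝ :=
  sSup {x : ℝ | ∃ f : Sym2 V → ℝ, IsFracMatching G f ∧ ∑ e : Sym2 V, f e = x}

/-- Membership in the family ℱ : fractional matchings of total weight m*(G) taking
values in {0, 1/2, 1}. -/
def InOptFamily [Fintype V] [DecidableEq V] (G : SimpleGraph V) (f : Sym2 V → ℝ) : Prop :=
  IsFracMatching G f ∧ (∑ e : Sym2 V, f e) = fracMatchingNumber G ∧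
    ∀ e : Sym2 V, f e = 0 ∨ f e = 1 / 2 ∨ f e = 1

/-- An optimal fractional matching: a member of ℱ with the largest number of
edges of weight 1. -/
def IsOptFracMatching [Fintype V] [DecidableEq V] (G : SimpleGraph V) (f : Sym2 V → ℝ) : Prop :=
  InOptFamily G f ∧
    ∀ g : Sym2 V → ℝ, InOptFamily G g →
      {e : Sym2 V | g e = 1}.ncard ≤ {e : Sym2 V | f e = 1}.ncard

/-- E₁(C) : the edges of `G` with exactly one endpoint on the cycle `C`. -/
def cutEdges (G : SimpleGraph V) (C : G.Subgraph) : Set (Sym2 V) :=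
  {e | e ∈ G.edgeSet ∧ ∃ a b : V, e = s(a, b) ∧ a ∈ C.verts ∧ b ∉ C.verts}


/-!
Modulo `1 + i` the Hermitian adjacency matrix becomes the adjacency matrix over `𝔽₂`, whose
determinant is the parity of the number of perfect matchings. Two distinct perfect matchings differ
along an even cycle, so on the vertices of a maximum matching of a graph without even cycles this
determinant is odd, and `r ≥ 2m`. Deleting a vertex of an even cycle lowers `κ` by at least one, `m`
by at most one and does not raise `r`; hence `r ≥ 2m - 2κ` for every mixed graph. If the neighbour
`v` of a pendant vertex lies on an even cycle, deleting `v` even lowers `r` by at least two, so this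
bound for the remaining graph gives `r ≥ 2m - 2κ + 2`.
-/

section Matrices

open scoped Matrix

lemma det_eq_sum_inv_eq_self_of_isSymm {n R : Type*} [Fintype n] [DecidableEq n] [CommRing R]
    [CharP R 2] {A : Matrix n n R} (hA : A.IsSymm) :
    A.det = ∑ σ : Equiv.Perm n with σ⁻¹ = σ, ∏ a, A (σ a) a := by
  have hsign (σ : Equiv.Perm n) : ((Equiv.Perm.sign σ : ℤ) : R) = 1 := by
    rcases Int.units_eq_one_or (Equiv.Perm.sign σ) with h | h <;> simp [h, CharTwo.neg_eq]
  have hinv (σ : Equiv.Perm n) : ∏ a, A (σ⁻¹ a) a = ∏ a, A (σ a) a := by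
    rw [← Equiv.prod_comp σ]
    refine Finset.prod_congr rfl fun a _ => ?_
    rw [← Equiv.Perm.mul_apply, inv_mul_cancel, Equiv.Perm.one_apply, hA.apply]
  have hcancel : ∑ σ : Equiv.Perm n with ¬ σ⁻¹ = σ, ∏ a, A (σ a) a = 0 := by
    refine Finset.sum_involution (fun σ _ => σ⁻¹) (fun σ _ => ?_)
      (fun σ hσ _ => (Finset.mem_filter.1 hσ).2) (fun σ hσ => ?_) fun σ _ => inv_inv σ
    · rw [hinv, CharTwo.add_self_eq_zero]
    · simpa [eq_comm] using hσ
  rw [Matrix.det_apply', ← Finset.sum_filter_add_sum_filter_not _ (fun σ => σ⁻¹ = σ)]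
  simp only [hsign, one_mul, hcancel, add_zero]

variable {K m n : Type*} [Field K] [Fintype n]

lemma rank_submatrix_compl_singleton_lt [Finite m] {A : Matrix m n K} {i : m} {j : n}
    (hij : A i j ≠ 0) (hcol : ∀ a ≠ i, A a j = 0) :
    (A.submatrix ((↑) : ({i}ᶜ : Set m) → m) id).rank < A.rank := by
  set B := A.submatrix ((↑) : ({i}ᶜ : Set m) → m) id
  have hle : Submodule.span K (Set.range B.row) ≤ Submodule.span K (Set.range A.row) :=
    Submodule.span_mono (Set.range_subset_iff.2 fun a => ⟨a, rfl⟩)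
  have hzero : Submodule.span K (Set.range B.row) ≤ LinearMap.ker (LinearMap.proj j) :=
    Submodule.span_le.2 (Set.range_subset_iff.2 fun a => hcol a a.2)
  have hrow : A.row i ∈ Submodule.span K (Set.range A.row) :=
    Submodule.subset_span (Set.mem_range_self i)
  rw [Matrix.rank_eq_finrank_span_row, Matrix.rank_eq_finrank_span_row]
  exact Submodule.finrank_lt_finrank_of_lt (hle.lt_of_not_ge fun h => hij (hzero (h hrow)))

lemma rank_submatrix_compl_singleton_add_two_le {A : Matrix n n K} {u v : n}
    [Fintype ({v}ᶜ : Set n)] (huv : u ≠ v) (huv₀ : A u v ≠ 0) (hvu₀ : A v u ≠ 0)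
    (hrow : ∀ a ≠ v, A u a = 0) (hcol : ∀ a ≠ v, A a u = 0) :
    (A.submatrix ((↑) : ({v}ᶜ : Set n) → n) ((↑) : ({v}ᶜ : Set n) → n)).rank + 2 ≤ A.rank := by
  set B := A.submatrix ((↑) : ({v}ᶜ : Set n) → n) id
  have hB : B.rank < A.rank := rank_submatrix_compl_singleton_lt hvu₀ hcol
  have hC : (Bᵀ.submatrix ((↑) : ({v}ᶜ : Set n) → n) id).rank < Bᵀ.rank :=
    rank_submatrix_compl_singleton_lt (j := ⟨u, huv⟩) huv₀ hrow
  rw [← Matrix.rank_transpose, Matrix.rank_transpose B] at hC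
  exact (Nat.succ_le_succ hC).trans hB

end Matrices

section Matchings

open SimpleGraph

variable {G : SimpleGraph V}

lemma ncard_verts_of_isMatching [Finite V] {N : G.Subgraph} (hN : N.IsMatching) :
    N.verts.ncard = 2 * N.edgeSet.ncard := by
  have := Fintype.ofFinite V
  have hdegree (a : N.verts) : N.coe.degree a = 1 := by
    rw [Subgraph.coe_degree]
    convert Subgraph.isMatching_iff_forall_degree.1 hN a a.2
  calc N.verts.ncard = ∑ a : N.verts, N.coe.degree a := by
        simp only [hdegree, Finset.sum_const, Finset.card_univ, smul_eq_mul, mul_one,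
          ← Nat.card_coe_set_eq, Nat.card_eq_fintype_card]
    _ = 2 * N.coe.edgeSet.ncard := by
        rw [← coe_edgeFinset N.coe, Set.ncard_coe_finset]
        convert N.coe.sum_degrees_eq_twice_card_edges
    _ = 2 * N.edgeSet.ncard := by
        rw [← Subgraph.image_coe_edgeSet_coe,
          Set.ncard_image_of_injective _ (Sym2.map.injective Subtype.val_injective)]

variable (G) in
lemma bddAbove_ncard_edgeSet_isMatching [Finite V] :
    BddAbove {k | ∃ N : G.Subgraph, N.IsMatching ∧ N.edgeSet.ncard = k} :=
  (Set.toFinite (Set.range fun N : G.Subgraph => N.edgeSet.ncard)).bddAbove.mono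
    (by rintro _ ⟨N, -, rfl⟩; exact ⟨N, rfl⟩)

lemma ncard_edgeSet_le_matchingNumber [Finite V] {N : G.Subgraph} (hN : N.IsMatching) :
    N.edgeSet.ncard ≤ matchingNumber G :=
  le_csSup (bddAbove_ncard_edgeSet_isMatching G) ⟨N, hN, rfl⟩

variable (G) in
lemma exists_isMatching_ncard_edgeSet_eq_matchingNumber [Finite V] :
    ∃ N : G.Subgraph, N.IsMatching ∧ N.edgeSet.ncard = matchingNumber G := by
  refine Nat.sSup_mem ?_ (bddAbove_ncard_edgeSet_isMatching G)
  exact ⟨_, ⊥, by simp [Subgraph.IsMatching], rfl⟩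

/-- The edges of a subgraph `N` of `G` with both ends in `S`, as a subgraph of `G.induce S`. Its
vertices are the ends of these edges, so that restricting a matching gives a matching. -/
def restrictEdges (N : G.Subgraph) (S : Set V) : (G.induce S).Subgraph where
  verts := {a | ∃ b : S, N.Adj a b}
  Adj a b := N.Adj a b
  adj_sub h := h.adj_sub
  edge_vert h := ⟨_, h⟩
  symm := ⟨fun _ _ h => h.symm⟩

lemma isMatching_restrictEdges {N : G.Subgraph} (hN : N.IsMatching) (S : Set V) :
    (restrictEdges N S).IsMatching := fun _ ⟨b, hab⟩ =>
  ⟨b, hab, fun _ hc => Subtype.ext (hN.eq_of_adj_left hc hab)⟩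

lemma isPerfectMatching_restrictEdges_verts {N : G.Subgraph} (hN : N.IsMatching) :
    (restrictEdges N N.verts).IsPerfectMatching := by
  refine ⟨isMatching_restrictEdges hN _, fun a => ?_⟩
  obtain ⟨b, hab, -⟩ := hN a.2
  exact ⟨⟨b, hab.snd_mem⟩, hab⟩

variable (G) in
lemma matchingNumber_le_induce_compl_singleton_add_one [Finite V] (v : V) :
    matchingNumber G ≤ matchingNumber (G.induce {v}ᶜ) + 1 := by
  obtain ⟨N, hN, hcard⟩ := exists_isMatching_ncard_edgeSet_eq_matchingNumber G
  set R := restrictEdges N {v}ᶜ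
  have hcover : N.edgeSet ⊆ Sym2.map Subtype.val '' R.edgeSet ∪ {e ∈ N.edgeSet | v ∈ e} := by
    rintro ⟨a, b⟩ hab
    by_cases hv : v ∈ s(a, b)
    · exact Or.inr ⟨hab, hv⟩
    · rw [Sym2.mem_iff, not_or] at hv
      exact Or.inl ⟨s(⟨a, Ne.symm hv.1⟩, ⟨b, Ne.symm hv.2⟩), hab, rfl⟩
  have hsubsingleton : {e ∈ N.edgeSet | v ∈ e}.Subsingleton := by
    rintro _ ⟨he, b, rfl⟩ _ ⟨he', b', rfl⟩
    exact congrArg (fun c => s(v, c)) (hN.eq_of_adj_left he he')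
  calc matchingNumber G = N.edgeSet.ncard := hcard.symm
    _ ≤ (Sym2.map Subtype.val '' R.edgeSet).ncard + {e ∈ N.edgeSet | v ∈ e}.ncard :=
        (Set.ncard_le_ncard hcover).trans (Set.ncard_union_le _ _)
    _ ≤ R.edgeSet.ncard + 1 :=
        add_le_add Set.ncard_image_le (Set.ncard_le_one_iff_subsingleton.2 hsubsingleton)
    _ ≤ matchingNumber (G.induce {v}ᶜ) + 1 :=
        Nat.add_le_add_right (ncard_edgeSet_le_matchingNumber (isMatching_restrictEdges hN _)) 1

end Matchings

section EvenCycles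

open SimpleGraph

variable {W : Type*} {G : SimpleGraph V} {H : SimpleGraph W}

lemma subgraph_map_injective {f : G →g H} (hf : Function.Injective f) :
    Function.Injective (Subgraph.map f) := by
  refine Function.LeftInverse.injective (g := Subgraph.comap f) fun C => ?_
  ext a b
  · simp [hf.eq_iff]
  · simpa [Relation.Map, hf.eq_iff] using C.adj_sub

lemma IsCycleSubgraph.map {f : G →g H} (hf : Function.Injective f) {C : G.Subgraph}
    (hC : IsCycleSubgraph C) : IsCycleSubgraph (C.map f) := by
  refine ⟨Subgraph.connected_iff'.2 ?_, ?_⟩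
  · let g : C.coe →g (C.map f).coe :=
      ⟨fun a => ⟨f a, a, a.2, rfl⟩, fun h => ⟨_, _, h, rfl, rfl⟩⟩
    refine hC.1.coe.map g ?_
    rintro ⟨_, a, ha, rfl⟩
    exact ⟨⟨a, ha⟩, rfl⟩
  · rintro _ ⟨a, ha, rfl⟩
    have hnbrs : {w | (C.map f).Adj (f a) w} = f '' {w | C.Adj a w} := by
      ext w
      simp [Relation.Map, hf.eq_iff]
    rw [hnbrs, Set.ncard_image_of_injective _ hf, hC.2 a ha]

lemma ncard_verts_map {f : G →g H} (hf : Function.Injective f) (C : G.Subgraph) :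
    (C.map f).verts.ncard = C.verts.ncard :=
  Set.ncard_image_of_injective _ hf

lemma OnEvenCycle.of_induce {S : Set V} {a : S} (h : OnEvenCycle (G.induce S) a) :
    OnEvenCycle G a := by
  obtain ⟨C, hC, heven, ha⟩ := h
  let f := (Embedding.induce (G := G) S).toHom
  have hf : Function.Injective f := Subtype.val_injective
  exact ⟨C.map f, hC.map hf, (ncard_verts_map hf C).symm ▸ heven, a, ha, rfl⟩

lemma evenCycleCount_induce_lt [Finite V] {S : Set V} {v : V} (hv : v ∉ S)
    (hcycle : OnEvenCycle G v) : evenCycleCount (G.induce S) < evenCycleCount G := by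
  obtain ⟨C, hC, heven, hvC⟩ := hcycle
  let f := (Embedding.induce (G := G) S).toHom
  have hf : Function.Injective f := Subtype.val_injective
  unfold evenCycleCount
  rw [← Set.ncard_image_of_injective _ (subgraph_map_injective hf)]
  refine Set.ncard_lt_ncard ((Set.ssubset_iff_of_subset ?_).2 ⟨C, ⟨hC, heven⟩, ?_⟩) (Set.toFinite _)
  · rintro _ ⟨D, ⟨hD, hDeven⟩, rfl⟩
    exact ⟨hD.map hf, (ncard_verts_map hf D).symm ▸ hDeven⟩
  · rintro ⟨D, -, rfl⟩
    obtain ⟨a, -, rfl⟩ := hvC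
    exact hv a.2

lemma exists_adj_of_mem_supp {c : G.ConnectedComponent} (hc : c.supp.Nontrivial) {a : V}
    (ha : a ∈ c.supp) : ∃ w, G.Adj a w := by
  have : Nontrivial c.toSubgraph.verts := Set.nontrivial_coe_sort.2 hc
  obtain ⟨w, hw⟩ := c.connected_toSubgraph.preconnected.exists_adj_of_nontrivial ⟨a, ha⟩
  exact ⟨w, hw.adj_sub⟩

lemma isCycleSubgraph_toSubgraph_of_isCycles (hG : G.IsCycles) {c : G.ConnectedComponent}
    (hc : c.supp.Nontrivial) : IsCycleSubgraph c.toSubgraph := by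
  refine ⟨c.connected_toSubgraph, fun a ha => ?_⟩
  have hnbrs : {w | c.toSubgraph.Adj a w} = G.neighborSet a :=
    Set.ext fun w => ⟨fun h => h.2.2, fun h => ⟨ha, (c.mem_supp_congr_adj h).1 ha, h⟩⟩
  rw [hnbrs]
  exact hG (exists_adj_of_mem_supp hc ha)

open scoped symmDiff in
lemma exists_onEvenCycle_of_isPerfectMatching_ne [Finite V] {N N' : G.Subgraph}
    (hN : N.IsPerfectMatching) (hN' : N'.IsPerfectMatching) (hne : N ≠ N') :
    ∃ v, OnEvenCycle G v := by
  set D := N.spanningCoe ∆ N'.spanningCoe with hD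
  have hDadj (a b : V) : D.Adj a b ↔ N.Adj a b ∧ ¬ N'.Adj a b ∨ N'.Adj a b ∧ ¬ N.Adj a b := by
    simp [hD, symmDiff_def]
  have hDG : D ≤ G := fun a b h => (hDadj a b).1 h |>.elim (·.1.adj_sub) (·.1.adj_sub)
  obtain ⟨v, w, hvw⟩ : ∃ v w, D.Adj v w := by
    by_contra! hempty
    refine hne (Subgraph.ext (hN.2.verts_eq_univ.trans hN'.2.verts_eq_univ.symm) ?_)
    ext a b
    grind
  set c := D.connectedComponentMk v
  have hc : c.supp.Nontrivial :=
    ⟨v, rfl, w, ConnectedComponent.sound hvw.symm.reachable, hvw.ne⟩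
  have hcycle : IsCycleSubgraph c.toSubgraph :=
    isCycleSubgraph_toSubgraph_of_isCycles (hN.symmDiff_isCycles hN') hc
  have hmatched : (N.induce c.supp).IsMatching := by
    intro a ha
    obtain ⟨b, hab, huniq⟩ := hN.1 (hN.2 a)
    obtain ⟨d, hd⟩ := exists_adj_of_mem_supp hc ha
    have hDab : D.Adj a b := by
      obtain ⟨b', hab', huniq'⟩ := hN'.1 (hN'.2 a)
      grind
    exact ⟨b, ⟨ha, (c.mem_supp_congr_adj hDab).1 ha, hab⟩, fun e he => huniq e he.2.2⟩
  have heven : Even c.toSubgraph.verts.ncard :=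
    (ncard_verts_of_isMatching hmatched).symm ▸ even_two_mul _
  have hinj : Function.Injective (Hom.ofLE hDG) := Function.injective_id
  exact ⟨v, c.toSubgraph.map (Hom.ofLE hDG), hcycle.map hinj,
    (ncard_verts_map hinj c.toSubgraph).symm ▸ heven, v, rfl, rfl⟩

end EvenCycles

section PerfectMatchings

open SimpleGraph

variable (G : SimpleGraph V)

/-- The perfect matching of `G` that joins each vertex to its image under an involution of the
vertex set moving every vertex to a neighbour. -/
def matchingOfInvolution (σ : {σ : Equiv.Perm V // σ⁻¹ = σ ∧ ∀ a, G.Adj (σ a) a}) : G.Subgraph where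
  verts := Set.univ
  Adj a b := σ.1 a = b
  adj_sub := by rintro a _ rfl; exact (σ.2.2 a).symm
  edge_vert _ := Set.mem_univ _
  symm := ⟨by rintro a _ rfl; exact (Equiv.Perm.inv_eq_iff_eq.1 (by rw [σ.2.1])).symm⟩

lemma isPerfectMatching_matchingOfInvolution
    (σ : {σ : Equiv.Perm V // σ⁻¹ = σ ∧ ∀ a, G.Adj (σ a) a}) :
    (matchingOfInvolution G σ).IsPerfectMatching :=
  Subgraph.isPerfectMatching_iff.2 fun a => ⟨σ.1 a, rfl, fun _ h => Eq.symm h⟩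

lemma matchingOfInvolution_injective : Function.Injective (matchingOfInvolution G) := by
  intro σ τ h
  ext a
  have : (matchingOfInvolution G τ).Adj a (σ.1 a) := h ▸ rfl
  exact Eq.symm this

lemma exists_matchingOfInvolution_eq {N : G.Subgraph} (hN : N.IsPerfectMatching) :
    ∃ σ, matchingOfInvolution G σ = N := by
  choose p hp huniq using Subgraph.isPerfectMatching_iff.1 hN
  have hinv : Function.Involutive p := fun a => (huniq _ _ (hp a).symm).symm
  refine ⟨⟨hinv.toPerm, rfl, fun a => (hp a).symm.adj_sub⟩, ?_⟩
  ext a b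
  · exact iff_of_true trivial (hN.2 a)
  · exact ⟨fun h => h ▸ hp a, fun h => (huniq a b h).symm⟩

lemma card_involution_eq_card_isPerfectMatching :
    Nat.card {σ : Equiv.Perm V // σ⁻¹ = σ ∧ ∀ a, G.Adj (σ a) a} =
      Nat.card {N : G.Subgraph // N.IsPerfectMatching} := by
  refine Nat.card_eq_of_bijective (fun σ => ⟨_, isPerfectMatching_matchingOfInvolution G σ⟩)
    ⟨fun σ τ h => matchingOfInvolution_injective G (Subtype.ext_iff.1 h), fun N => ?_⟩
  obtain ⟨σ, hσ⟩ := exists_matchingOfInvolution_eq G N.2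
  exact ⟨σ, Subtype.ext hσ⟩

lemma det_adjMatrix_eq_card_isPerfectMatching (R : Type*) [CommRing R] [CharP R 2] [Fintype V]
    [DecidableEq V] [DecidableRel G.Adj] :
    (G.adjMatrix R).det = (Nat.card {N : G.Subgraph // N.IsPerfectMatching} : R) := by
  have hprod (σ : Equiv.Perm V) :
      ∏ a, G.adjMatrix R (σ a) a = if ∀ a, G.Adj (σ a) a then 1 else 0 := by
    simp [adjMatrix_apply, Finset.prod_boole]
  rw [det_eq_sum_inv_eq_self_of_isSymm G.isSymm_adjMatrix,
    ← card_involution_eq_card_isPerfectMatching, Nat.card_eq_fintype_card, Fintype.card_subtype]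
  simp only [hprod, Finset.sum_boole, Finset.filter_filter]

variable {G} in
lemma card_isPerfectMatching_eq_one [Finite V] (hcycle : ∀ v, ¬ OnEvenCycle G v)
    {N : G.Subgraph} (hN : N.IsPerfectMatching) :
    Nat.card {N : G.Subgraph // N.IsPerfectMatching} = 1 := by
  refine Nat.card_eq_one_iff_exists.2 ⟨⟨N, hN⟩, fun ⟨N', hN'⟩ => Subtype.ext ?_⟩
  by_contra hne
  obtain ⟨v, hv⟩ := exists_onEvenCycle_of_isPerfectMatching_ne hN' hN hne
  exact hcycle v hv

end PerfectMatchings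

section HermitianMatrix

variable (M : MixedGraph V)

/-- The Hermitian adjacency matrix with entries in `ℤ[i]`, which can be reduced modulo `1 + i`. -/
noncomputable def MixedGraph.gaussMatrix : Matrix V V GaussianInt := fun a b =>
  if M.arc a b then ⟨0, 1⟩
  else if M.arc b a then ⟨0, -1⟩
  else if M.graph.Adj a b then 1 else 0

/-- Reduction `ℤ[i] → ℤ[i] / (1 + i) = 𝔽₂`, which sends `i` to `1`. -/
def toZModTwo : GaussianInt →+* ZMod 2 :=
  Zsqrtd.lift ⟨1, by decide⟩

lemma map_toZModTwo_gaussMatrix : M.gaussMatrix.map toZModTwo = M.graph.adjMatrix (ZMod 2) := by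
  ext a b
  have hab := M.arc_adj a b
  have hba := M.arc_adj b a
  simp only [Matrix.map_apply, MixedGraph.gaussMatrix, SimpleGraph.adjMatrix_apply]
  split_ifs <;> simp_all [toZModTwo, SimpleGraph.adj_comm]

variable [Fintype V] [DecidableEq V]

lemma map_toComplex_gaussMatrix : M.gaussMatrix.map GaussianInt.toComplex = M.hMatrix := by
  ext a b
  simp only [Matrix.map_apply, MixedGraph.gaussMatrix, MixedGraph.hMatrix]
  split_ifs <;> simp [GaussianInt.toComplex_def']

lemma hRank_induce (S : Set V) [Fintype S] :
    (M.induce S).hRank = (M.hMatrix.submatrix ((↑) : S → V) ((↑) : S → V)).rank :=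
  rfl

lemma hRank_induce_le (S : Set V) [Fintype S] : (M.induce S).hRank ≤ M.hRank :=
  hRank_induce M S ▸ Matrix.rank_submatrix_le M.hMatrix _ _

variable {M}

lemma hMatrix_apply_ne_zero_iff {a b : V} : M.hMatrix a b ≠ 0 ↔ M.graph.Adj a b := by
  have hab := M.arc_adj a b
  have hba := M.arc_adj b a
  unfold MixedGraph.hMatrix
  split_ifs <;> simp_all [SimpleGraph.adj_comm]

lemma det_hMatrix_ne_zero {N : M.graph.Subgraph} (hN : N.IsPerfectMatching)
    (hcycle : ∀ v, ¬ OnEvenCycle M.graph v) : M.hMatrix.det ≠ 0 := by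
  have hred : toZModTwo M.gaussMatrix.det = 1 := by
    rw [RingHom.map_det, RingHom.mapMatrix_apply, map_toZModTwo_gaussMatrix,
      det_adjMatrix_eq_card_isPerfectMatching, card_isPerfectMatching_eq_one hcycle hN,
      Nat.cast_one]
  rw [← map_toComplex_gaussMatrix, ← RingHom.mapMatrix_apply, ← RingHom.map_det,
    Ne, GaussianInt.toComplex_eq_zero]
  intro hzero
  simp [hzero] at hred

lemma hRank_induce_compl_singleton_add_two_le {u v : V}
    (hpend : M.graph.neighborSet u = {v}) : (M.induce {v}ᶜ).hRank + 2 ≤ M.hRank := by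
  have hadj (a : V) : M.graph.Adj u a ↔ a = v := Set.ext_iff.1 hpend a
  have huv := (hadj v).2 rfl
  have hrow (a : V) (ha : a ≠ v) : M.hMatrix u a = 0 :=
    of_not_not fun h => ha ((hadj a).1 (hMatrix_apply_ne_zero_iff.1 h))
  have hcol (a : V) (ha : a ≠ v) : M.hMatrix a u = 0 :=
    of_not_not fun h => ha ((hadj a).1 (hMatrix_apply_ne_zero_iff.1 h).symm)
  rw [hRank_induce, MixedGraph.hRank]
  exact rank_submatrix_compl_singleton_add_two_le huv.ne (hMatrix_apply_ne_zero_iff.2 huv)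
    (hMatrix_apply_ne_zero_iff.2 huv.symm) hrow hcol

lemma two_mul_matchingNumber_le_hRank (hcycle : ∀ v, ¬ OnEvenCycle M.graph v) :
    2 * matchingNumber M.graph ≤ M.hRank := by
  obtain ⟨N, hN, hcard⟩ := exists_isMatching_ncard_edgeSet_eq_matchingNumber M.graph
  have hdet : (M.induce N.verts).hMatrix.det ≠ 0 :=
    det_hMatrix_ne_zero (isPerfectMatching_restrictEdges_verts hN)
      fun a ha => hcycle a ha.of_induce
  calc 2 * matchingNumber M.graph = N.verts.ncard := by rw [← hcard, ncard_verts_of_isMatching hN]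
    _ = (M.induce N.verts).hRank := by
        rw [MixedGraph.hRank, Matrix.rank_of_det_ne_zero hdet, ← Nat.card_coe_set_eq,
          Nat.card_eq_fintype_card]
    _ ≤ M.hRank := hRank_induce_le M _

variable (M) in
lemma two_mul_matchingNumber_le_hRank_add :
    2 * matchingNumber M.graph ≤ M.hRank + 2 * evenCycleCount M.graph := by
  induction h : evenCycleCount M.graph using Nat.strong_induction_on generalizing V with
  | _ k ih =>
    by_cases hcycle : ∃ v, OnEvenCycle M.graph v
    · obtain ⟨v, hv⟩ := hcycle
      have hκ : evenCycleCount (M.induce {v}ᶜ).graph < k :=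
        h ▸ evenCycleCount_induce_lt (Set.notMem_compl_iff.2 rfl) hv
      have hm : matchingNumber M.graph ≤ matchingNumber (M.induce {v}ᶜ).graph + 1 :=
        matchingNumber_le_induce_compl_singleton_add_one M.graph v
      have hr := hRank_induce_le M {v}ᶜ
      have hdeleted := ih _ hκ (M.induce {v}ᶜ) rfl
      lia
    · have := two_mul_matchingNumber_le_hRank (not_exists.1 hcycle)
      lia

end HermitianMatrix

/-- Let u be a pendant vertex of a mixed graph G̃ with unique
neighbour v. If r(G̃) = 2m(G) − 2κ(G) + s with s ∈ {0,1}, then v lies on no even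
cycle of G. -/
theorem neighbour_of_pendant_not_on_even_cycle
    {V : Type u} [Fintype V] [DecidableEq V] (M : MixedGraph V) (u v : V)
    (hpend : {w | M.graph.Adj u w} = {v}) (s : ℤ) (hs : s = 0 ∨ s = 1)
    (hr : (M.hRank : ℤ) =
      2 * (matchingNumber M.graph : ℤ) - 2 * (evenCycleCount M.graph : ℤ) + s) :
    ¬ OnEvenCycle M.graph v := by
  intro hv
  have hκ : evenCycleCount (M.induce {v}ᶜ).graph < evenCycleCount M.graph :=
    evenCycleCount_induce_lt (Set.notMem_compl_iff.2 rfl) hv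
  have hm : matchingNumber M.graph ≤ matchingNumber (M.induce {v}ᶜ).graph + 1 :=
    matchingNumber_le_induce_compl_singleton_add_one M.graph v
  have hrank : (M.induce {v}ᶜ).hRank + 2 ≤ M.hRank := hRank_induce_compl_singleton_add_two_le hpend
  have hdeleted := two_mul_matchingNumber_le_hRank_add (M.induce {v}ᶜ)
  lia

end MixedPaper
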